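/- Let R be a semiartinian von Neumann regular ring with primitive factors artinian. Then every countably generated weakly R-projective right R-module is projective. -/

import Mathlib

universe u

open Submodule Function

/-- The socle of a module: the supremum of all simple submodules. -/
def moduleSocle (R : Type*) (M : Type*) [Ring R] [AddCommGroup M] [Module R M] :
    Submodule R M :=
  sSup {W : Submodule R M | IsSimpleModule R ↥W}

/-- A ring is right semiartinian if every nonzero quotient of the right module `R_R`
has a nonzero socle. -/
def IsRightSemiartinian (R : Type u) [Ring R] : Prop :=
  ∀ I : Submodule Rᵐᵒᵖ R, I ≠ ⊤ → moduleSocle Rᵐᵒᵖ (R ⧸ I) ≠ ⊥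

/-- The right socle sequence of a ring: `S_0 = 0`, `S_{α+1}/S_α = Soc(R/S_α)`,
and unions at limits. -/
noncomputable def socleSeq (R : Type u) [Ring R] : Ordinal.{u} → Submodule Rᵐᵒᵖ R :=
  fun o => Ordinal.limitRecOn o ⊥
    (fun _ S => Submodule.comap S.mkQ (moduleSocle Rᵐᵒᵖ (R ⧸ S)))
    (fun o _ ih => ⨆ (β : Ordinal.{u}) (h : β < o), ih β h)

/-- `S_α`, viewed as a submodule of `S_{α+1}`; the kernel of the `α`-th layer
epimorphism `π_α : S_{α+1} → S_{α+1}/S_α`. -/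
noncomputable def layerKer (R : Type u) [Ring R] (α : Ordinal.{u}) :
    Submodule Rᵐᵒᵖ ↥(socleSeq R (α + 1)) :=
  (socleSeq R α).comap (socleSeq R (α + 1)).subtype

/-- The `α`-th layer `L_α = S_{α+1}/S_α` of a ring. -/
noncomputable abbrev Layer (R : Type u) [Ring R] (α : Ordinal.{u}) :=
  ↥(socleSeq R (α + 1)) ⧸ layerKer R α

/-- A module `M` is weakly `R`-projective if for each `0 < α ≤ σ`, every homomorphism
`f : M → L_α` with finitely generated image factors through the `α`-th layer
epimorphism `π_α : S_{α+1} → L_α`. -/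
def WeaklyRProjective (R : Type u) [Ring R] (σ : Ordinal.{u})
    (M : Type u) [AddCommGroup M] [Module Rᵐᵒᵖ M] : Prop :=
  ∀ α : Ordinal.{u}, 0 < α → α ≤ σ →
    ∀ f : M →ₗ[Rᵐᵒᵖ] Layer R α, (LinearMap.range f).FG →
      ∃ g : M →ₗ[Rᵐᵒᵖ] ↥(socleSeq R (α + 1)), (layerKer R α).mkQ ∘ₗ g = f

/-- A ring is von Neumann regular if each `r` admits `s` with `r * s * r = r`. -/
def IsVNRegular (R : Type u) [Ring R] : Prop :=
  ∀ r : R, ∃ s : R, r * s * r = r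

/-- The annihilator of a right `R`-module, as a submodule of the right module `R_R`. -/
def rightAnnihilator (R : Type u) [Ring R] (M : Type u) [AddCommGroup M]
    [Module Rᵐᵒᵖ M] : Submodule Rᵐᵒᵖ R where
  carrier := {r : R | ∀ m : M, MulOpposite.op r • m = 0}
  add_mem' := by
    intro a b ha hb m
    rw [MulOpposite.op_add, add_smul, ha m, hb m, add_zero]
  zero_mem' := by
    intro m
    rw [MulOpposite.op_zero, zero_smul]
  smul_mem' := by
    intro c r hr m
    have h : MulOpposite.op (c • r) = c * MulOpposite.op r := by
      rw [MulOpposite.smul_eq_mul_unop, MulOpposite.op_mul, MulOpposite.op_unop]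
    rw [h, mul_smul, hr m, smul_zero]

/-- A ring has (right) primitive factors artinian if, for each right primitive
(two-sided) ideal `P`, i.e. the annihilator of a simple right module, the factor
`R/P` is (right) artinian. -/
def HasPFA (R : Type u) [Ring R] : Prop :=
  ∀ (M : Type u) [AddCommGroup M] [Module Rᵐᵒᵖ M], IsSimpleModule Rᵐᵒᵖ M →
    IsArtinian Rᵐᵒᵖ (R ⧸ rightAnnihilator R M)

/-! ### Auxiliary facts on the socle sequence -/

theorem moduleSocle_semisimple (A M : Type*) [Ring A] [AddCommGroup M] [Module A M] :
    IsSemisimpleModule A (moduleSocle A M) := by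
  unfold moduleSocle
  rw [sSup_eq_iSup]
  exact isSemisimpleModule_biSup_of_isSemisimpleModule_submodule fun m hm => by
    have : IsSimpleModule A m := hm
    infer_instance

theorem moduleSocle_le_comap {A M N : Type*} [Ring A] [AddCommGroup M] [Module A M]
    [AddCommGroup N] [Module A N] (f : M →ₗ[A] N) :
    moduleSocle A M ≤ (moduleSocle A N).comap f := by
  refine sSup_le fun W hW => ?_
  have hW : IsSimpleModule A W := hW
  rcases LinearMap.injective_or_eq_zero (f ∘ₗ W.subtype) with h | h
  · have e := LinearEquiv.ofInjective _ h
    have : IsSimpleModule A (LinearMap.range (f ∘ₗ W.subtype)) := IsSimpleModule.congr e.symm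
    intro x hx
    have h2 : LinearMap.range (f ∘ₗ W.subtype) ≤ moduleSocle A N := le_sSup this
    exact h2 ⟨⟨x, hx⟩, rfl⟩
  · intro x hx
    have : f x = 0 := LinearMap.congr_fun h ⟨x, hx⟩
    simp [this]

theorem socleSeq_zero (R : Type u) [Ring R] : socleSeq R 0 = ⊥ := by
  unfold socleSeq
  rw [Ordinal.limitRecOn_zero]

theorem socleSeq_add_one (R : Type u) [Ring R] (α : Ordinal.{u}) :
    socleSeq R (α + 1) =
      Submodule.comap (socleSeq R α).mkQ (moduleSocle Rᵐᵒᵖ (R ⧸ socleSeq R α)) := by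
  unfold socleSeq
  rw [Ordinal.limitRecOn_add_one]

theorem socleSeq_limit (R : Type u) [Ring R] (α : Ordinal.{u}) (h : Order.IsSuccLimit α) :
    socleSeq R α = ⨆ (β : Ordinal.{u}) (_ : β < α), socleSeq R β := by
  unfold socleSeq
  rw [Ordinal.limitRecOn_limit _ _ _ _ h]

theorem socleSeq_le_add_one (R : Type u) [Ring R] (α : Ordinal.{u}) :
    socleSeq R α ≤ socleSeq R (α + 1) := by
  rw [socleSeq_add_one]
  intro x hx
  rw [Submodule.mem_comap, Submodule.mkQ_apply, (Submodule.Quotient.mk_eq_zero _).2 hx]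
  exact zero_mem _

theorem socleSeq_mono (R : Type u) [Ring R] : Monotone (socleSeq R) := by
  intro β α
  induction α using Ordinal.limitRecOn with
  | zero => intro h; rw [nonpos_iff_eq_zero.1 h]
  | add_one α ih =>
    intro h
    rcases h.eq_or_lt with h | h
    · rw [h]
    · exact (ih (Order.lt_add_one_iff.1 h)).trans (socleSeq_le_add_one R α)
  | limit α hα ih =>
    intro h
    rcases h.eq_or_lt with h | h
    · rw [h]
    · rw [socleSeq_limit R α hα]
      exact le_iSup₂_of_le β h le_rfl

theorem exists_mem_of_mem_limit (R : Type u) [Ring R] (α : Ordinal.{u})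
    (h : Order.IsSuccLimit α) (x : R) (hx : x ∈ socleSeq R α) :
    ∃ β < α, x ∈ socleSeq R β := by
  rw [socleSeq_limit R α h, iSup_subtype'] at hx
  have : Nonempty {β // β < α} := ⟨⟨0, h.bot_lt⟩⟩
  rw [Submodule.mem_iSup_of_directed] at hx
  · obtain ⟨β, hβ⟩ := hx
    exact ⟨β.1, β.2, hβ⟩
  · intro a b
    rcases le_total a.1 b.1 with hab | hab
    · exact ⟨b, socleSeq_mono R hab, le_rfl⟩
    · exact ⟨a, le_rfl, socleSeq_mono R hab⟩

/-- Left multiplication as a map of right modules. -/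
def leftMulHom (R : Type u) [Ring R] (r : R) : R →ₗ[Rᵐᵒᵖ] R where
  toFun x := r * x
  map_add' := mul_add r
  map_smul' c x := by simp [MulOpposite.smul_eq_mul_unop, mul_assoc]

/-- The members of the socle sequence are left ideals. -/
theorem socleSeq_le_comap (R : Type u) [Ring R] (r : R) (α : Ordinal.{u}) :
    socleSeq R α ≤ (socleSeq R α).comap (leftMulHom R r) := by
  induction α using Ordinal.limitRecOn with
  | zero => rw [socleSeq_zero]; exact bot_le
  | add_one α ih =>
    intro x hx
    rw [socleSeq_add_one] at hx ⊢
    exact moduleSocle_le_comap ((socleSeq R α).mapQ _ (leftMulHom R r) ih) hx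
  | limit α hα ih =>
    intro x hx
    obtain ⟨β, hβ, h⟩ := exists_mem_of_mem_limit R α hα x hx
    exact socleSeq_mono R hβ.le (ih β hβ h)

theorem layer_semisimple (R : Type u) [Ring R] (α : Ordinal.{u}) :
    IsSemisimpleModule Rᵐᵒᵖ (Layer R α) := by
  have := moduleSocle_semisimple Rᵐᵒᵖ (R ⧸ socleSeq R α)
  let f : Layer R α →ₗ[Rᵐᵒᵖ] (R ⧸ socleSeq R α) :=
    (layerKer R α).mapQ (socleSeq R α) (socleSeq R (α + 1)).subtype le_rfl
  have hf : Injective f := by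
    rw [← LinearMap.ker_eq_bot, LinearMap.ker_eq_bot']
    intro m
    obtain ⟨y, rfl⟩ := Submodule.mkQ_surjective _ m
    intro h
    have h' : y.1 ∈ socleSeq R α := (Submodule.Quotient.mk_eq_zero _).1 h
    exact (Submodule.Quotient.mk_eq_zero _).2 h'
  have hmem : ∀ m, f m ∈ moduleSocle Rᵐᵒᵖ (R ⧸ socleSeq R α) := by
    intro m
    obtain ⟨y, rfl⟩ := Submodule.mkQ_surjective _ m
    have h1 := (socleSeq_add_one R α).le y.2
    exact h1
  exact IsSemisimpleModule.of_injective (f.codRestrict _ hmem)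
    (fun a b h => hf (congrArg Subtype.val h))

/-! ### Injectivity of simple modules -/

/-- `unop` as a linear map. -/
def unopLin (R : Type u) [Ring R] : Rᵐᵒᵖ →ₗ[Rᵐᵒᵖ] R where
  toFun := MulOpposite.unop
  map_add' _ _ := rfl
  map_smul' _ _ := rfl

/-- `op` as a linear map. -/
def opLin (R : Type u) [Ring R] : R →ₗ[Rᵐᵒᵖ] Rᵐᵒᵖ where
  toFun := MulOpposite.op
  map_add' _ _ := rfl
  map_smul' _ _ := rfl

/-- The map `r ↦ x r`. -/
def evHom (R : Type u) [Ring R] {M : Type u} [AddCommGroup M] [Module Rᵐᵒᵖ M] (x : M) :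
    R →ₗ[Rᵐᵒᵖ] M where
  toFun r := MulOpposite.op r • x
  map_add' a b := by rw [MulOpposite.op_add, add_smul]
  map_smul' c r := by
    rw [MulOpposite.smul_eq_mul_unop, MulOpposite.op_mul, MulOpposite.op_unop, mul_smul]
    rfl

theorem quot_annihilator_semisimple (R : Type u) [Ring R] (hpfa : HasPFA R)
    (S : Type u) [AddCommGroup S] [Module Rᵐᵒᵖ S] [hS : IsSimpleModule Rᵐᵒᵖ S] :
    IsSemisimpleModule Rᵐᵒᵖ (R ⧸ rightAnnihilator R S) := by
  have := hpfa S hS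
  rw [IsArtinian.isSemisimpleModule_iff_jacobson]
  let g : R →ₗ[Rᵐᵒᵖ] (S → S) := LinearMap.pi fun s => evHom R s
  have hg : rightAnnihilator R S = LinearMap.ker g := by
    ext r
    rw [LinearMap.mem_ker]
    exact ⟨fun h => funext h, fun h m => congrFun h m⟩
  refine Module.jacobson_eq_bot_of_injective ((rightAnnihilator R S).liftQ g hg.le) ?_
    (Module.jacobson_pi_eq_bot _ _ fun i => IsSimpleModule.jacobson_eq_bot Rᵐᵒᵖ _)
  rw [← LinearMap.ker_eq_bot]
  exact Submodule.ker_liftQ_eq_bot' _ _ hg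

theorem simple_injective (R : Type u) [Ring R] (hvnr : IsVNRegular R) (hpfa : HasPFA R)
    (S : Type u) [AddCommGroup S] [Module Rᵐᵒᵖ S] [hS : IsSimpleModule Rᵐᵒᵖ S] :
    Module.Injective Rᵐᵒᵖ S := by
  have hss := quot_annihilator_semisimple R hpfa S
  refine Module.Baer.injective fun I g => ?_
  let q : Rᵐᵒᵖ →ₗ[Rᵐᵒᵖ] (R ⧸ rightAnnihilator R S) :=
    (rightAnnihilator R S).mkQ ∘ₗ unopLin R
  let j := q ∘ₗ I.subtype
  have hker : LinearMap.ker j ≤ LinearMap.ker g := by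
    intro x hx
    rw [LinearMap.mem_ker] at hx ⊢
    have hx' : MulOpposite.unop x.1 ∈ rightAnnihilator R S :=
      (Submodule.Quotient.mk_eq_zero _).1 hx
    obtain ⟨s, hs⟩ := hvnr (MulOpposite.unop x.1)
    have h1 : x = x.1 • (MulOpposite.op s • x) := by
      apply Subtype.ext
      apply MulOpposite.unop_injective
      simp [hs]
    rw [h1, map_smul]
    exact hx' _
  obtain ⟨h, hh⟩ := IsSemisimpleModule.extension_property
    ((LinearMap.ker j).liftQ j le_rfl)
    (by rw [← LinearMap.ker_eq_bot]; exact Submodule.ker_liftQ_eq_bot' _ _ rfl)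
    ((LinearMap.ker j).liftQ g hker)
  refine ⟨h ∘ₗ q, fun x hx => ?_⟩
  exact LinearMap.congr_fun hh ((LinearMap.ker j).mkQ ⟨x, hx⟩)

theorem fg_semisimple_injective (R : Type u) [Ring R] (hvnr : IsVNRegular R) (hpfa : HasPFA R)
    (W : Type u) [AddCommGroup W] [Module Rᵐᵒᵖ W] [IsSemisimpleModule Rᵐᵒᵖ W]
    [Module.Finite Rᵐᵒᵖ W] : Module.Injective Rᵐᵒᵖ W := by
  obtain ⟨n, S, e, hs⟩ := IsSemisimpleModule.exists_linearEquiv_fin_dfinsupp Rᵐᵒᵖ W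
  have hinj : ∀ i, Module.Injective Rᵐᵒᵖ (S i) := fun i => by
    have := hs i
    exact simple_injective R hvnr hpfa _
  have hpi : Module.Injective Rᵐᵒᵖ (∀ i, S i) := inferInstance
  let e' := e.trans (DFinsupp.linearEquivFunOnFintype (R := Rᵐᵒᵖ) (M := fun i => S i))
  refine Module.Baer.injective ?_
  exact Module.Baer.of_equiv e'.symm (Module.Baer.of_injective hpi)

/-! ### Regularity of the module -/

theorem exists_regular_hom (R : Type u) [Ring R]
    (hvnr : IsVNRegular R) (hpfa : HasPFA R)
    (σ : Ordinal.{u}) (M : Type u) [AddCommGroup M] [Module Rᵐᵒᵖ M]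
    (hM : WeaklyRProjective R σ M) (α : Ordinal.{u}) :
    α ≤ σ + 1 → ∀ (x : M) (s : R), s ∈ socleSeq R α → MulOpposite.op s • x = x →
      ∃ φ : M →ₗ[Rᵐᵒᵖ] R, MulOpposite.op (φ x) • x = x := by
  induction α using Ordinal.limitRecOn with
  | zero =>
    intro _ x s hs hx
    rw [socleSeq_zero, Submodule.mem_bot] at hs
    refine ⟨0, ?_⟩
    subst hs
    simpa using hx
  | limit α hα ih =>
    intro hle x s hs hx
    obtain ⟨β, hβ, h⟩ := exists_mem_of_mem_limit R α hα s hs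
    exact ih β hβ (hβ.le.trans hle) x s h hx
  | add_one β ih =>
    intro hle x s hs hx
    have hle' : β ≤ σ := by simpa using hle
    have hss := layer_semisimple R β
    let K : Submodule Rᵐᵒᵖ M := (socleSeq R β).map (evHom R x)
    have hlam : layerKer R β ≤
        LinearMap.ker (K.mkQ ∘ₗ evHom R x ∘ₗ (socleSeq R (β + 1)).subtype) := by
      intro y hy
      rw [LinearMap.mem_ker]
      exact (Submodule.Quotient.mk_eq_zero _).2 ⟨y.1, hy, rfl⟩
    let lam : Layer R β →ₗ[Rᵐᵒᵖ] (M ⧸ K) := (layerKer R β).liftQ _ hlam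
    have hxlam : K.mkQ x ∈ LinearMap.range lam := by
      refine ⟨(layerKer R β).mkQ ⟨s, hs⟩, ?_⟩
      change K.mkQ (MulOpposite.op s • x) = _
      rw [hx]
    let X : Submodule Rᵐᵒᵖ M := Submodule.span Rᵐᵒᵖ {x}
    have hX : ∀ y : X, (K.mkQ ∘ₗ X.subtype) y ∈ LinearMap.range lam := by
      intro y
      obtain ⟨c, hc⟩ := Submodule.mem_span_singleton.1 y.2
      change K.mkQ y.1 ∈ _
      rw [← hc, map_smul]
      exact Submodule.smul_mem _ _ hxlam
    obtain ⟨h, hh⟩ := IsSemisimpleModule.lifting_property lam.rangeRestrict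
      lam.surjective_rangeRestrict ((K.mkQ ∘ₗ X.subtype).codRestrict _ hX)
    have hh' : ∀ y : X, lam (h y) = K.mkQ y.1 := fun y =>
      congrArg Subtype.val (LinearMap.congr_fun hh y)
    have hXf : Module.Finite Rᵐᵒᵖ X := Module.Finite.span_singleton _ _
    have hinj := fg_semisimple_injective R hvnr hpfa (LinearMap.range h)
    obtain ⟨k, hk⟩ := hinj.out X.subtype X.injective_subtype h.rangeRestrict
    let f : M →ₗ[Rᵐᵒᵖ] Layer R β := (LinearMap.range h).subtype ∘ₗ k
    have hf : ∀ y : X, f y.1 = h y := fun y => congrArg Subtype.val (hk y)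
    have hfr : LinearMap.range f = LinearMap.range h := by
      apply le_antisymm
      · rintro _ ⟨m, rfl⟩
        exact (k m).2
      · rintro _ ⟨y, rfl⟩
        exact ⟨y.1, hf y⟩
    have hffg : (LinearMap.range f).FG := by
      rw [hfr]
      exact Module.Finite.iff_fg.1 inferInstance
    have hlift : ∃ g : M →ₗ[Rᵐᵒᵖ] ↥(socleSeq R (β + 1)), (layerKer R β).mkQ ∘ₗ g = f := by
      rcases eq_or_ne β 0 with h0 | h0
      · have hbot : layerKer R β = ⊥ := by
          subst h0
          unfold layerKer
          rw [socleSeq_zero, Submodule.comap_bot, Submodule.ker_subtype]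
        have hi : Injective (layerKer R β).mkQ := by
          rw [← LinearMap.ker_eq_bot, Submodule.ker_mkQ, hbot]
        let e := LinearEquiv.ofBijective (layerKer R β).mkQ ⟨hi, Submodule.mkQ_surjective _⟩
        refine ⟨e.symm.toLinearMap ∘ₗ f, ?_⟩
        ext m
        exact e.apply_symm_apply (f m)
      · exact hM β (pos_iff_ne_zero.2 h0) hle' f hffg
    obtain ⟨g, hg⟩ := hlift
    obtain ⟨c, hc⟩ := hvnr (g x).1
    let φ : M →ₗ[Rᵐᵒᵖ] R := leftMulHom R c ∘ₗ (socleSeq R (β + 1)).subtype ∘ₗ g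
    let x' : M := x - MulOpposite.op (φ x) • x
    have hgx' : g x' = 0 := by
      apply Subtype.ext
      change (g (x - MulOpposite.op (φ x) • x)).1 = 0
      rw [map_sub, map_smul]
      change (g x).1 - (g x).1 * (c * (g x).1) = 0
      rw [← mul_assoc, hc, sub_self]
    have hx'X : x' ∈ X := Submodule.sub_mem _ (Submodule.mem_span_singleton_self x)
      (Submodule.smul_mem _ _ (Submodule.mem_span_singleton_self x))
    have hhx' : h ⟨x', hx'X⟩ = 0 := by
      rw [← hf, ← hg]
      change (layerKer R β).mkQ (g x') = 0
      rw [hgx', map_zero]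
    have hx'K : x' ∈ K := by
      have := hh' ⟨x', hx'X⟩
      rw [hhx', map_zero] at this
      exact (Submodule.Quotient.mk_eq_zero _).1 this.symm
    obtain ⟨t, ht, htx⟩ := hx'K
    have htx : MulOpposite.op t • x = x' := htx
    obtain ⟨w, hw⟩ := hvnr t
    have hfix : MulOpposite.op (w * t) • x' = x' := by
      rw [← htx, ← mul_smul, ← MulOpposite.op_mul, ← mul_assoc, hw]
    obtain ⟨φ', hφ'⟩ := ih (hle'.trans (le_self_add)) x' (w * t)
      (socleSeq_le_comap R w β ht) hfix
    let T : M →ₗ[Rᵐᵒᵖ] M := LinearMap.id - evHom R x ∘ₗ φ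
    have hT : T x = x' := rfl
    refine ⟨φ + leftMulHom R (1 - φ x) ∘ₗ φ' ∘ₗ T, ?_⟩
    change MulOpposite.op (φ x + (1 - φ x) * φ' (T x)) • x = x
    rw [hT, MulOpposite.op_add, MulOpposite.op_mul, add_smul, mul_smul, MulOpposite.op_sub,
      sub_smul, MulOpposite.op_one, one_smul]
    change _ + MulOpposite.op (φ' x') • x' = x
    rw [hφ']
    exact add_sub_cancel _ _

/-! ### Countably generated regular modules are projective -/

/-- The successive projections killing the generators one after the other. -/
noncomputable def killSeq {A M : Type*} [Ring A] [AddCommGroup M] [Module A M]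
    (φ : M → (M →ₗ[A] A)) (x : ℕ → M) : ℕ → (M →ₗ[A] M)
  | 0 => LinearMap.id
  | n + 1 => killSeq φ x n -
      (LinearMap.toSpanSingleton A M (killSeq φ x n (x n))) ∘ₗ
        (φ (killSeq φ x n (x n))) ∘ₗ killSeq φ x n

theorem projective_of_regular {A M : Type*} [Ring A] [AddCommGroup M] [Module A M]
    (hreg : ∀ x : M, ∃ φ : M →ₗ[A] A, φ x • x = x)
    (x : ℕ → M) (hx : Submodule.span A (Set.range x) = ⊤) : Module.Projective A M := by
  choose φ hφ using hreg
  let T := killSeq φ x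
  let y : ℕ → M := fun n => T n (x n)
  let ψ : ℕ → (M →ₗ[A] A) := fun n => φ (y n) ∘ₗ T n
  have hT : ∀ n m, T (n + 1) m = T n m - ψ n m • y n := fun n m => rfl
  have hT0 : ∀ m, T 0 m = m := fun m => rfl
  have hψ : ∀ n m, T n m = 0 → ψ n m = 0 := by
    intro n m h
    change φ (y n) (T n m) = 0
    rw [h, map_zero]
  have hstep : ∀ n m, T n m = 0 → T (n + 1) m = 0 := by
    intro n m h
    rw [hT, h, hψ n m h, zero_smul, sub_zero]
  have hmono : ∀ m n k, n ≤ k → T n m = 0 → T k m = 0 := by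
    intro m n k hnk h
    induction k, hnk using Nat.le_induction with
    | base => exact h
    | succ k _ ih => exact hstep k m ih
  have hkill : ∀ n, T (n + 1) (x n) = 0 := by
    intro n
    rw [hT]
    change y n - φ (y n) (y n) • y n = 0
    rw [hφ, sub_self]
  have hev : ∀ m, ∃ n, T n m = 0 := by
    intro m
    have hm : m ∈ Submodule.span A (Set.range x) := hx ▸ Submodule.mem_top
    induction hm using Submodule.span_induction with
    | mem m h => obtain ⟨n, rfl⟩ := h; exact ⟨n + 1, hkill n⟩
    | zero => exact ⟨0, map_zero _⟩
    | add a b _ _ ha hb =>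
      obtain ⟨i, hi⟩ := ha
      obtain ⟨j, hj⟩ := hb
      refine ⟨max i j, ?_⟩
      rw [map_add, hmono a i _ (le_max_left _ _) hi, hmono b j _ (le_max_right _ _) hj, add_zero]
    | smul c a _ ha =>
      obtain ⟨i, hi⟩ := ha
      exact ⟨i, by rw [map_smul, hi, smul_zero]⟩
  have hsum : ∀ m n, ∑ k ∈ Finset.range n, ψ k m • y k = m - T n m := by
    intro m n
    induction n with
    | zero => simp [hT0]
    | succ n ih => rw [Finset.sum_range_succ, ih, hT]; abel
  have hfin : ∀ m n, T n m = 0 → (Function.support fun k => ψ k m) ⊆ Finset.range n := by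
    intro m n h k hk
    by_contra hkn
    apply hk
    exact hψ k m (hmono m n k (by simpa using hkn) h)
  have hfin' : ∀ m, (Function.support fun k => ψ k m).Finite := fun m => by
    obtain ⟨n, hn⟩ := hev m
    exact (Finset.finite_toSet _).subset (hfin m n hn)
  let i : M →ₗ[A] (ℕ →₀ A) :=
    { toFun := fun m => Finsupp.ofSupportFinite (fun k => ψ k m) (hfin' m)
      map_add' := fun a b => by ext k; exact map_add (ψ k) a b
      map_smul' := fun c a => by ext k; exact map_smul (ψ k) c a }
  refine Module.Projective.of_split i (Finsupp.linearCombination A y) ?_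
  ext m
  obtain ⟨n, hn⟩ := hev m
  change Finsupp.linearCombination A y (i m) = m
  rw [Finsupp.linearCombination_apply,
    Finsupp.sum_of_support_subset (s := Finset.range n) _ ?_ _ (by simp)]
  · have := hsum m n
    rw [hn, sub_zero] at this
    exact this
  · intro k hk
    exact hfin m n hn (Finsupp.mem_support_iff.1 hk)

/-- Lemma 8(2) of the paper: over a semiartinian von Neumann regular
ring with primitive factors artinian, every countably generated weakly `R`-projective
module is projective. -/
theorem projective_of_countable_weaklyRProjective (R : Type u) [Ring R]
    (hsa : IsRightSemiartinian R) (hvnr : IsVNRegular R) (hpfa : HasPFA R)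
    (σ : Ordinal.{u}) (hσ : IsLeast {o : Ordinal.{u} | socleSeq R o = ⊤} (σ + 1))
    (M : Type u) [AddCommGroup M] [Module Rᵐᵒᵖ M]
    (hcg : ∃ S : Set M, S.Countable ∧ Submodule.span Rᵐᵒᵖ S = ⊤)
    (hM : WeaklyRProjective R σ M) :
    Module.Projective Rᵐᵒᵖ M := by
  obtain ⟨S, hS, hspan⟩ := hcg
  obtain ⟨x, hx⟩ := (hS.insert 0).exists_eq_range ⟨0, Set.mem_insert _ _⟩
  refine projective_of_regular (A := Rᵐᵒᵖ) (fun m => ?_) x ?_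
  · obtain ⟨φ, hφ⟩ := exists_regular_hom R hvnr hpfa σ M hM (σ + 1) le_rfl m 1
      (by rw [show socleSeq R (σ + 1) = ⊤ from hσ.1]; exact Submodule.mem_top) (by simp)
    exact ⟨opLin R ∘ₗ φ, hφ⟩
  · rw [← hx, eq_top_iff, ← hspan]
    exact Submodule.span_mono (Set.subset_insert _ _)
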